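/- Let k be an algebraically closed field and let A and B be two complete Noetherian local commutative rings containing k such that the completed tensor product A⊗̂_k B is Noetherian. If A and B are integral domains, then A⊗̂_k B is an integral domain. -/

import Mathlib

open TensorProduct

/-- The ideal `r = m ⊗ B + A ⊗ n` of `C = A ⊗[k] B`, where `m` and `n` are the Jacobson
radicals of `A` and `B` (for a local ring, the Jacobson radical is the maximal ideal). -/
noncomputable def tensorRadical (k A B : Type*) [Field k] [CommRing A] [CommRing B]
    [Algebra k A] [Algebra k B] : Ideal (A ⊗[k] B) :=
  Ideal.map (Algebra.TensorProduct.includeLeft (R := k) (S := k) (A := A) (B := B))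
      ((⊥ : Ideal A).jacobson) ⊔
    Ideal.map (Algebra.TensorProduct.includeRight (R := k) (A := A) (B := B))
      ((⊥ : Ideal B).jacobson)

/-- The completed tensor product `A ⊗̂[k] B`: the `r`-adic separated completion of
`C = A ⊗[k] B`, i.e. the inverse limit of the rings `C ⧸ r ^ i`. -/
noncomputable abbrev CompletedTensor (k A B : Type*) [Field k] [CommRing A] [CommRing B]
    [Algebra k A] [Algebra k B] : Type _ :=
  AdicCompletion (tensorRadical k A B) (A ⊗[k] B)

/-!
For a field `k`, contracting `A ⊗[k] B` against functionals on `B` that vanish on a power of `J`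
shows that an injection of `A`, complete for `I`, into a ring `V`, separated for `I' ⊇ I V`, stays
injective after completing `A ⊗[k] B → V ⊗[k] B`. A Noetherian domain `A` and a proper ideal `I`
embed in this way into a discrete valuation ring `V` and its maximal ideal `(t)`: on a chart of the
blow-up of `I`, the ideal becomes principal; localize at a height one prime containing it and apply
Krull–Akizuki to a valuation ring dominating the localization. In the completion of `V ⊗[k] B` the
element `t` is regular, the topology is `t`-adically separated, and the quotient by `t` is the
completion of `(V ⧸ t) ⊗[k] B` for the zero ideal and `J`; if that quotient is a domain, `t` is
prime and every nonzero element is a power of `t` times an element outside `(t)`, so the completion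
is a domain. Doing this for both factors leaves an uncompleted tensor product of two domains, which
is a domain because `k` is algebraically closed.
-/

section Slices

variable {k A A' B B' : Type*} [Field k] [CommRing A] [CommRing A'] [CommRing B] [CommRing B']
  [Algebra k A] [Algebra k A'] [Algebra k B] [Algebra k B']

/-- The ideal `I ⊗ B + A ⊗ J` of `A ⊗[k] B`; `tensorRadical` is the case of the Jacobson
radicals. -/
noncomputable def tensorIdeal (k : Type*) [Field k] [Algebra k A] [Algebra k B]
    (I : Ideal A) (J : Ideal B) : Ideal (A ⊗[k] B) :=
  I.map (Algebra.TensorProduct.includeLeft (R := k) (S := k)) ⊔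
    J.map (Algebra.TensorProduct.includeRight (R := k))

theorem tensorIdeal_bot_bot : tensorIdeal k (⊥ : Ideal A) (⊥ : Ideal B) = ⊥ := by
  simp only [tensorIdeal, Ideal.map_bot, bot_sup_eq]

theorem tensorIdeal_eq_ker (I : Ideal A) (J : Ideal B) :
    tensorIdeal k I J = RingHom.ker
      (Algebra.TensorProduct.map (Ideal.Quotient.mkₐ k I) (Ideal.Quotient.mkₐ k J)) := by
  rw [Algebra.TensorProduct.map_ker _ _ (Ideal.Quotient.mkₐ_surjective k I)
    (Ideal.Quotient.mkₐ_surjective k J), tensorIdeal]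
  congr <;> exact Ideal.mk_ker.symm

theorem tensorIdeal_pow_add_le (I : Ideal A) (J : Ideal B) (i j : ℕ) :
    tensorIdeal k I J ^ (i + j) ≤ tensorIdeal k (I ^ i) (J ^ j) := by
  simpa only [tensorIdeal, Ideal.map_pow] using Ideal.sup_pow_add_le_pow_sup_pow

theorem tensorIdeal_pow_pow_le (I : Ideal A) (J : Ideal B) (n : ℕ) :
    tensorIdeal k (I ^ n) (J ^ n) ≤ tensorIdeal k I J ^ n := by
  simp only [tensorIdeal, Ideal.map_pow]
  exact sup_le (Ideal.pow_right_mono le_sup_left n) (Ideal.pow_right_mono le_sup_right n)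

theorem map_tensorIdeal (φ : A →ₐ[k] A') (ψ : B →ₐ[k] B') (I : Ideal A) (J : Ideal B) :
    (tensorIdeal k I J).map (Algebra.TensorProduct.map φ ψ) =
      tensorIdeal k (I.map φ) (J.map ψ) := by
  simp only [tensorIdeal, Ideal.map_sup, Ideal.map_mapₐ,
    Algebra.TensorProduct.map_comp_includeLeft, Algebra.TensorProduct.map_comp_includeRight]

theorem tensorIdeal_le_comap_map (φ : A →ₐ[k] A') (ψ : B →ₐ[k] B') {I : Ideal A} {J : Ideal B}
    {I' : Ideal A'} {J' : Ideal B'} (hI : I ≤ I'.comap φ) (hJ : J ≤ J'.comap ψ) :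
    tensorIdeal k I J ≤ (tensorIdeal k I' J').comap (Algebra.TensorProduct.map φ ψ) := by
  rw [← Ideal.map_le_iff_le_comap, map_tensorIdeal]
  exact sup_le_sup (Ideal.map_mono (Ideal.map_le_iff_le_comap.2 hI))
    (Ideal.map_mono (Ideal.map_le_iff_le_comap.2 hJ))

/-- Contraction of the second tensor factor against a functional `w`: the `A`-linear map
`A ⊗[k] B → A` sending `a ⊗ b` to `w b • a`. -/
noncomputable def slice (A : Type*) [CommRing A] [Algebra k A] (w : B →ₗ[k] k) :
    A ⊗[k] B →ₗ[A] A :=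
  (AlgebraTensorModule.rid k A A).toLinearMap ∘ₗ AlgebraTensorModule.map LinearMap.id w

@[simp]
theorem slice_tmul (w : B →ₗ[k] k) (a : A) (b : B) : slice A w (a ⊗ₜ b) = w b • a := by
  simp [slice]

theorem slice_map (φ : A →ₐ[k] A') (ψ : B →ₐ[k] B') (w : B' →ₗ[k] k) (x : A ⊗[k] B) :
    slice A' w (Algebra.TensorProduct.map φ ψ x) = φ (slice A (w ∘ₗ ψ.toLinearMap) x) := by
  induction x with
  | zero => simp
  | tmul a b => simp
  | add x y hx hy => simp only [map_add, hx, hy]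

theorem exists_slice_ne_zero {x : A ⊗[k] B} (hx : x ≠ 0) : ∃ w : B →ₗ[k] k, slice A w x ≠ 0 := by
  by_contra! h
  let b := Module.Free.chooseBasis k B
  have hcoord (i) : (b.baseChange A).coord i = slice A (b.coord i) :=
    AlgebraTensorModule.ext fun a c => by simp
  exact hx ((b.baseChange A).forall_coord_eq_zero_iff.1 fun i => by rw [hcoord, h])

theorem exists_slice_notMem {I : Ideal A} {J : Ideal B} {x : A ⊗[k] B}
    (hx : x ∉ tensorIdeal k I J) : ∃ w : B →ₗ[k] k, (∀ b ∈ J, w b = 0) ∧ slice A w x ∉ I := by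
  rw [tensorIdeal_eq_ker, RingHom.mem_ker] at hx
  obtain ⟨w, hw⟩ := exists_slice_ne_zero hx
  refine ⟨w ∘ₗ (Ideal.Quotient.mkₐ k J).toLinearMap, fun b hb => ?_, fun h => hw ?_⟩
  · simp [Ideal.Quotient.eq_zero_iff_mem.2 hb]
  · exact (slice_map _ _ w x).trans (Ideal.Quotient.eq_zero_iff_mem.2 h)

theorem slice_mem {I : Ideal A} {J : Ideal B} {w : B →ₗ[k] k} (hw : ∀ b ∈ J, w b = 0)
    {x : A ⊗[k] B} (hx : x ∈ tensorIdeal k I J) : slice A w x ∈ I := by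
  suffices h : tensorIdeal k I J ≤
      { carrier := {x | ∀ c, slice A w (c * x) ∈ I}
        zero_mem' := fun c => by simp
        add_mem' := fun hx hy c => by simpa only [mul_add, map_add] using I.add_mem (hx c) (hy c)
        smul_mem' := fun d x hx c => by simpa only [smul_eq_mul, mul_assoc] using hx (c * d) } by
    simpa using h hx 1
  refine sup_le (Ideal.map_le_iff_le_comap.2 fun a ha c => ?_)
    (Ideal.map_le_iff_le_comap.2 fun b hb c => ?_)
  · induction c with
    | zero => simp
    | tmul a' b' =>
      simpa [Algebra.smul_def] using I.mul_mem_left _ (I.mul_mem_left _ ha)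
    | add c d hc hd => simpa only [add_mul, map_add] using I.add_mem hc hd
  · induction c with
    | zero => simp
    | tmul a' b' => simp [hw _ (J.mul_mem_left _ hb)]
    | add c d hc hd => simpa only [add_mul, map_add] using I.add_mem hc hd

end Slices

section TensorDomain

theorem exists_algHom_ne_zero {k S : Type*} [Field k] [IsAlgClosed k] [CommRing S] [IsReduced S]
    [Algebra k S] [Algebra.FiniteType k S] {a : S} (ha : a ≠ 0) : ∃ χ : S →ₐ[k] k, χ a ≠ 0 := by
  have : IsJacobsonRing S := isJacobsonRing_of_finiteType (A := k)
  have ha' : a ∉ (⊥ : Ideal S).jacobson := by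
    rwa [← Ideal.radical_eq_jacobson, Ideal.isRadical_bot.radical, Ideal.mem_bot]
  simp only [Ideal.jacobson, Ideal.mem_sInf, not_forall] at ha'
  obtain ⟨m, ⟨-, hm⟩, ham⟩ := ha'
  let _ : Field (S ⧸ m) := Ideal.Quotient.field m
  have : Module.Finite k (S ⧸ m) := finite_of_finite_type_of_isJacobsonRing k (S ⧸ m)
  let χ : S ⧸ m →ₐ[k] k := IsAlgClosed.lift
  refine ⟨χ.comp (Ideal.Quotient.mkₐ k m), fun h => ham ?_⟩
  exact Ideal.Quotient.eq_zero_iff_mem.1 (χ.toRingHom.injective (h.trans (map_zero χ).symm))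

variable (k : Type*) [Field k] [IsAlgClosed k]

theorem isDomain_tensorProduct_of_finiteType (S B : Type*) [CommRing S] [IsDomain S]
    [CommRing B] [IsDomain B] [Algebra k S] [Algebra k B] [Algebra.FiniteType k S] :
    IsDomain (S ⊗[k] B) := by
  have : NoZeroDivisors (S ⊗[k] B) := by
    refine ⟨fun {f g} hfg => ?_⟩
    by_contra! hne
    obtain ⟨u, hu⟩ := exists_slice_ne_zero hne.1
    obtain ⟨v, hv⟩ := exists_slice_ne_zero hne.2
    obtain ⟨χ, hχ⟩ := exists_algHom_ne_zero (k := k) (mul_ne_zero hu hv)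
    rw [map_mul] at hχ
    have : IsDomain (k ⊗[k] B) := (Algebra.TensorProduct.lid k B).toMulEquiv.isDomain B
    let ev := Algebra.TensorProduct.map χ (AlgHom.id k B)
    have slice_ev (w : B →ₗ[k] k) (x : S ⊗[k] B) : slice k w (ev x) = χ (slice S w x) :=
      slice_map χ (AlgHom.id k B) w x
    rcases mul_eq_zero.1 ((map_mul ev f g).symm.trans ((congrArg ev hfg).trans (map_zero ev)))
      with hf | hg
    · exact left_ne_zero_of_mul hχ (by rw [← slice_ev, hf, map_zero])
    · exact right_ne_zero_of_mul hχ (by rw [← slice_ev, hg, map_zero])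
  exact NoZeroDivisors.to_isDomain _

theorem isDomain_tensorProduct (A B : Type*) [CommRing A] [IsDomain A] [CommRing B] [IsDomain B]
    [Algebra k A] [Algebra k B] : IsDomain (A ⊗[k] B) := by
  have : NoZeroDivisors (A ⊗[k] B) := by
    refine ⟨fun {f g} hfg => ?_⟩
    obtain ⟨P, hP, hf⟩ := TensorProduct.Algebra.exists_of_fg f
    obtain ⟨Q, hQ, hg⟩ := TensorProduct.Algebra.exists_of_fg g
    have range_mono {S T : Subalgebra k A} (h : S ≤ T) :
        LinearMap.range (S.val.toLinearMap.rTensor B) ≤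
          LinearMap.range (T.val.toLinearMap.rTensor B) := by
      rw [show S.val.toLinearMap = T.val.toLinearMap ∘ₗ (Subalgebra.inclusion h).toLinearMap
        from rfl, LinearMap.rTensor_comp]
      exact LinearMap.range_comp_le_range _ _
    obtain ⟨f, rfl⟩ := range_mono (le_sup_left : P ≤ P ⊔ Q) hf
    obtain ⟨g, rfl⟩ := range_mono (le_sup_right : Q ≤ P ⊔ Q) hg
    have : Algebra.FiniteType k ↥(P ⊔ Q) := (P ⊔ Q).fg_iff_finiteType.1 (hP.sup hQ)
    have := isDomain_tensorProduct_of_finiteType k ↥(P ⊔ Q) B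
    let ι := Algebra.TensorProduct.map (P ⊔ Q).val (AlgHom.id k B)
    have hι : Function.Injective ι :=
      Module.Flat.rTensor_preserves_injective_linearMap _ Subtype.val_injective
    have hfg' : f * g = 0 := hι (by rw [map_mul, map_zero]; exact hfg)
    exact (mul_eq_zero.1 hfg').imp (fun h => by rw [h, map_zero]) (fun h => by rw [h, map_zero])
  exact NoZeroDivisors.to_isDomain _

end TensorDomain

section AdicCompletion

variable {C D : Type*} [CommRing C] [CommRing D]

theorem adicCauchySequence_sub_mem {r : Ideal C} (c : AdicCompletion.AdicCauchySequence r C)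
    {m n : ℕ} (hmn : m ≤ n) : c n - c m ∈ r ^ m := by
  simpa using SModEq.sub_mem.1 (c.2 hmn).symm

theorem adicCompletion_mk_eq_zero_iff {r : Ideal C} {c : AdicCompletion.AdicCauchySequence r C} :
    AdicCompletion.mk r C c = 0 ↔ ∀ n, c n ∈ r ^ n := by
  refine ⟨fun h n => ?_, fun h => AdicCompletion.ext_evalₐ fun n => ?_⟩
  · rw [← Ideal.Quotient.eq_zero_iff_mem]
    exact (AdicCompletion.evalₐ_mk r n c).symm.trans (by rw [h, map_zero])
  · rw [AdicCompletion.evalₐ_mk, map_zero]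
    exact Ideal.Quotient.eq_zero_iff_mem.2 (h n)

theorem pow_le_comap_pow {r : Ideal C} {s : Ideal D} {f : C →+* D} (h : r ≤ s.comap f) (n : ℕ) :
    r ^ n ≤ (s ^ n).comap f :=
  (Ideal.pow_right_mono h n).trans (Ideal.le_comap_pow f n)

theorem factorPow_comp_quotientMap_comp_evalₐ {r : Ideal C} {s : Ideal D} {f : C →+* D}
    (h : r ≤ s.comap f) {m n : ℕ} (hmn : m ≤ n) :
    (Ideal.Quotient.factorPow s hmn).comp ((Ideal.quotientMap (s ^ n) f (pow_le_comap_pow h n)).comp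
        (AdicCompletion.evalₐ r n : AdicCompletion r C →+* C ⧸ r ^ n)) =
      (Ideal.quotientMap (s ^ m) f (pow_le_comap_pow h m)).comp
        (AdicCompletion.evalₐ r m : AdicCompletion r C →+* C ⧸ r ^ m) := by
  ext x
  obtain ⟨c, rfl⟩ := AdicCompletion.mk_surjective r C x
  have hc : f (c n) - f (c m) ∈ s ^ m := by
    rw [← map_sub]
    exact pow_le_comap_pow h m (adicCauchySequence_sub_mem c hmn)
  simpa using Ideal.Quotient.eq.2 hc

/-- The ring homomorphism of completions induced by a ring homomorphism `f` that carries `r` into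
`s`; unlike `AdicCompletion.map` it may change the base ring. -/
noncomputable def adicCompletionMap {r : Ideal C} {s : Ideal D} (f : C →+* D)
    (h : r ≤ s.comap f) : AdicCompletion r C →+* AdicCompletion s D :=
  AdicCompletion.liftRingHom s
    (fun n => (Ideal.quotientMap (s ^ n) f (pow_le_comap_pow h n)).comp
      (AdicCompletion.evalₐ r n : AdicCompletion r C →+* C ⧸ r ^ n))
    (factorPow_comp_quotientMap_comp_evalₐ h)

theorem evalₐ_adicCompletionMap {r : Ideal C} {s : Ideal D} (f : C →+* D) (h : r ≤ s.comap f)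
    (x : AdicCompletion r C) (n : ℕ) :
    AdicCompletion.evalₐ s n (adicCompletionMap f h x) =
      Ideal.quotientMap (s ^ n) f (pow_le_comap_pow h n) (AdicCompletion.evalₐ r n x) :=
  AdicCompletion.evalₐ_liftRingHom _ _ (factorPow_comp_quotientMap_comp_evalₐ h) _ _

theorem adicCompletionMap_algebraMap {r : Ideal C} {s : Ideal D} (f : C →+* D)
    (h : r ≤ s.comap f) (x : C) :
    adicCompletionMap f h (algebraMap C _ x) = algebraMap D _ (f x) :=
  AdicCompletion.ext_evalₐ fun n => by simp [evalₐ_adicCompletionMap]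

theorem adicCompletionMap_mk_eq_zero_iff {r : Ideal C} {s : Ideal D} {f : C →+* D}
    {h : r ≤ s.comap f} {c : AdicCompletion.AdicCauchySequence r C} :
    adicCompletionMap f h (AdicCompletion.mk r C c) = 0 ↔ ∀ n, f (c n) ∈ s ^ n := by
  have heval (n : ℕ) : AdicCompletion.evalₐ s n (adicCompletionMap f h (AdicCompletion.mk r C c)) =
      Ideal.Quotient.mk (s ^ n) (f (c n)) := by simp [evalₐ_adicCompletionMap]
  simp only [← Ideal.Quotient.eq_zero_iff_mem, ← heval]
  exact ⟨fun hc n => by rw [hc, map_zero],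
    fun hc => AdicCompletion.ext_evalₐ fun n => by rw [hc, map_zero]⟩

theorem isDomain_adicCompletion_of_ringEquiv {r : Ideal C} {s : Ideal D} (e : C ≃+* D)
    (h : r.map e = s) [IsDomain (AdicCompletion s D)] : IsDomain (AdicCompletion r C) := by
  have hcomap (n : ℕ) : (s ^ n).comap (e : C →+* D) = r ^ n := by
    rw [← h, ← Ideal.map_pow]
    exact Ideal.comap_map_of_bijective e e.bijective
  have hle : r ≤ s.comap (e : C →+* D) := by simpa using (hcomap 1).ge
  have hinj : Function.Injective (adicCompletionMap (e : C →+* D) hle) := by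
    refine (injective_iff_map_eq_zero _).2 fun x hx => ?_
    obtain ⟨c, rfl⟩ := AdicCompletion.mk_surjective r C x
    exact adicCompletion_mk_eq_zero_iff.2 fun n =>
      (hcomap n).le (adicCompletionMap_mk_eq_zero_iff.1 hx n)
  exact hinj.isDomain _

end AdicCompletion

section RegularElement

theorem isDomain_of_isPrime_span_singleton {R : Type*} [CommRing R] {t : R}
    (ht : t ∈ nonZeroDivisors R) (hprime : (Ideal.span {t}).IsPrime)
    (hsep : ∀ f, (∀ n, t ^ n ∣ f) → f = 0) : IsDomain R := by
  have : Nontrivial R :=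
    ⟨0, 1, fun h => hprime.ne_top ((Ideal.eq_top_iff_one _).2 (h ▸ zero_mem _))⟩
  have exists_unit_part {f : R} (hf : f ≠ 0) : ∃ n g, f = t ^ n * g ∧ ¬ t ∣ g :=
    ⟨_, (not_not.1 fun h => hf (hsep f (FiniteMultiplicity.not_iff_forall.1 h)) :
      FiniteMultiplicity t f).exists_eq_pow_mul_and_not_dvd⟩
  have : NoZeroDivisors R := by
    refine ⟨fun {f g} hfg => ?_⟩
    by_contra! hne
    obtain ⟨m, f, rfl, hf⟩ := exists_unit_part hne.1
    obtain ⟨n, g, rfl, hg⟩ := exists_unit_part hne.2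
    rw [mul_mul_mul_comm, ← pow_add] at hfg
    have hfg' : f * g = 0 := (mul_left_mem_nonZeroDivisors_eq_zero_iff (pow_mem ht _)).1 hfg
    rcases hprime.mem_or_mem (hfg' ▸ zero_mem _ : f * g ∈ Ideal.span {t}) with h | h
    · exact hf (Ideal.mem_span_singleton.1 h)
    · exact hg (Ideal.mem_span_singleton.1 h)
  exact NoZeroDivisors.to_isDomain R

variable {C C' : Type*} [CommRing C] [CommRing C'] {t : C} {K : Ideal C}

theorem span_singleton_sup_pow_succ_le (t : C) (K : Ideal C) (n : ℕ) :
    (Ideal.span {t} ⊔ K) ^ (n + 1) ≤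
      Ideal.span {t} * (Ideal.span {t} ⊔ K) ^ n ⊔ K ^ (n + 1) := by
  set T := Ideal.span {t}
  induction n with
  | zero => simp
  | succ n ih =>
    have hK : K * (T ⊔ K) ^ n ≤ (T ⊔ K) ^ (n + 1) := by
      rw [pow_succ']
      exact Ideal.mul_mono_left le_sup_right
    calc (T ⊔ K) ^ (n + 2) = T * (T ⊔ K) ^ (n + 1) ⊔ K * (T ⊔ K) ^ (n + 1) := by
          rw [pow_succ', Ideal.sup_mul]
      _ ≤ T * (T ⊔ K) ^ (n + 1) ⊔ (T * (K * (T ⊔ K) ^ n) ⊔ K ^ (n + 2)) := by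
          refine sup_le_sup_left ((Ideal.mul_mono_right ih).trans_eq ?_) _
          rw [Ideal.mul_sup, mul_left_comm, ← pow_succ']
      _ ≤ T * (T ⊔ K) ^ (n + 1) ⊔ K ^ (n + 2) :=
          sup_le le_sup_left (sup_le_sup_right (Ideal.mul_mono_right hK) _)

theorem mem_pow_of_mul_mem_pow_succ (ht : ∀ n y, t * y ∈ K ^ n → y ∈ K ^ n) {n : ℕ} {y : C}
    (hy : t * y ∈ (Ideal.span {t} ⊔ K) ^ (n + 1)) : y ∈ (Ideal.span {t} ⊔ K) ^ n := by
  obtain ⟨u, hu, v, hv, huv⟩ := Submodule.mem_sup.1 (span_singleton_sup_pow_succ_le t K n hy)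
  obtain ⟨z, hz, rfl⟩ := Ideal.mem_span_singleton_mul.1 hu
  have hyz : y - z ∈ K ^ (n + 1) := ht _ _ (by rwa [mul_sub, ← huv, add_sub_cancel_left])
  rw [← sub_add_cancel y z]
  exact add_mem (Ideal.pow_right_mono le_sup_right n (Ideal.pow_le_pow_right n.le_succ hyz)) hz

theorem algebraMap_mul_adicCompletion_mk {r : Ideal C} (t : C)
    (c : AdicCompletion.AdicCauchySequence r C) :
    algebraMap C (AdicCompletion r C) t * AdicCompletion.mk r C c =
      AdicCompletion.mk r C (t • c) := by
  rw [← Algebra.smul_def, map_smul]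

theorem algebraMap_mem_nonZeroDivisors_adicCompletion
    (ht : ∀ n y, t * y ∈ K ^ n → y ∈ K ^ n) :
    algebraMap C (AdicCompletion (Ideal.span {t} ⊔ K) C) t ∈
      nonZeroDivisors (AdicCompletion (Ideal.span {t} ⊔ K) C) := by
  refine mem_nonZeroDivisors_iff_left.2 fun f hf => ?_
  obtain ⟨c, rfl⟩ := AdicCompletion.mk_surjective _ _ f
  rw [algebraMap_mul_adicCompletion_mk, adicCompletion_mk_eq_zero_iff] at hf
  refine adicCompletion_mk_eq_zero_iff.2 fun n => ?_
  rw [← sub_sub_cancel (c (n + 1)) (c n)]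
  exact sub_mem (mem_pow_of_mul_mem_pow_succ ht (hf (n + 1)))
    (adicCauchySequence_sub_mem c n.le_succ)

theorem eq_zero_of_forall_pow_algebraMap_dvd {r : Ideal C} (ht : t ∈ r) {f : AdicCompletion r C}
    (hf : ∀ n, algebraMap C (AdicCompletion r C) t ^ n ∣ f) : f = 0 := by
  refine AdicCompletion.ext_evalₐ fun n => ?_
  obtain ⟨g, rfl⟩ := hf n
  rw [← map_pow, map_mul, AlgHom.commutes, Ideal.Quotient.algebraMap_eq,
    Ideal.Quotient.eq_zero_iff_mem.2 (Ideal.pow_mem_pow ht n), zero_mul, map_zero]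

theorem algebraMap_dvd_adicCompletion_mk (ht : ∀ n y, t * y ∈ K ^ n → y ∈ K ^ n)
    (c : AdicCompletion.AdicCauchySequence (Ideal.span {t} ⊔ K) C)
    (hc : ∀ n, c n ∈ Ideal.span {t} ⊔ K ^ n) :
    algebraMap C (AdicCompletion (Ideal.span {t} ⊔ K) C) t ∣ AdicCompletion.mk _ C c := by
  have hKr {m n : ℕ} (h : m ≤ n) : K ^ n ≤ (Ideal.span {t} ⊔ K) ^ m :=
    (Ideal.pow_le_pow_right h).trans (Ideal.pow_right_mono le_sup_right m)
  have exists_quotient (n : ℕ) : ∃ x, c (n + 1) - t * x ∈ K ^ (n + 1) := by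
    obtain ⟨u, hu, v, hv, huv⟩ := Submodule.mem_sup.1 (hc (n + 1))
    obtain ⟨x, rfl⟩ := Ideal.mem_span_singleton'.1 hu
    exact ⟨x, by rwa [← huv, mul_comm, add_sub_cancel_left]⟩
  choose x hx using exists_quotient
  have hcauchy (n : ℕ) : x (n + 1) - x n ∈ (Ideal.span {t} ⊔ K) ^ n := by
    refine mem_pow_of_mul_mem_pow_succ ht ?_
    rw [show t * (x (n + 1) - x n) = (c (n + 2) - c (n + 1)) - (c (n + 2) - t * x (n + 1)) +
      (c (n + 1) - t * x n) by ring]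
    exact add_mem (sub_mem (adicCauchySequence_sub_mem c (n + 1).le_succ)
      (hKr (n + 1).le_succ (hx (n + 1)))) (hKr le_rfl (hx n))
  let y := AdicCompletion.AdicCauchySequence.mk (Ideal.span {t} ⊔ K) C x fun n =>
    (SModEq.sub_mem.2 (by simpa using hcauchy n)).symm
  refine ⟨AdicCompletion.mk _ C y, sub_eq_zero.1 ?_⟩
  rw [algebraMap_mul_adicCompletion_mk, ← map_sub, adicCompletion_mk_eq_zero_iff]
  intro n
  change c n - t * x n ∈ (Ideal.span {t} ⊔ K) ^ n
  rw [← sub_sub_sub_cancel_left (t * x n) (c n) (c (n + 1))]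
  exact sub_mem (hKr n.le_succ (hx n)) (adicCauchySequence_sub_mem c n.le_succ)

theorem isDomain_adicCompletion_of_quotient (ht : ∀ n y, t * y ∈ K ^ n → y ∈ K ^ n)
    {π : C →+* C'} (hπ : Function.Surjective π) (hker : RingHom.ker π = Ideal.span {t})
    [IsDomain (AdicCompletion (K.map π) C')] :
    IsDomain (AdicCompletion (Ideal.span {t} ⊔ K) C) := by
  have hle : Ideal.span {t} ⊔ K ≤ (K.map π).comap π :=
    sup_le (hker.symm.le.trans (Ideal.ker_le_comap π)) Ideal.le_comap_map
  refine isDomain_of_isPrime_span_singleton (algebraMap_mem_nonZeroDivisors_adicCompletion ht) ?_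
    fun f => eq_zero_of_forall_pow_algebraMap_dvd
      (Ideal.mem_sup_left (Ideal.mem_span_singleton_self t))
  suffices h : Ideal.span {algebraMap C (AdicCompletion (Ideal.span {t} ⊔ K) C) t} =
      RingHom.ker (adicCompletionMap π hle) from h ▸ RingHom.ker_isPrime _
  refine le_antisymm ?_ fun f hf => Ideal.mem_span_singleton.2 ?_
  · rw [Ideal.span_singleton_le_iff_mem, RingHom.mem_ker]
    have hπt : π t = 0 := (hker ▸ Ideal.mem_span_singleton_self t : t ∈ RingHom.ker π)
    rw [adicCompletionMap_algebraMap, hπt, map_zero]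
  · obtain ⟨c, rfl⟩ := AdicCompletion.mk_surjective _ _ f
    refine algebraMap_dvd_adicCompletion_mk ht c fun n => ?_
    have hn := adicCompletionMap_mk_eq_zero_iff.1 hf n
    rwa [← Ideal.map_pow, ← Ideal.mem_comap, Ideal.comap_map_of_surjective' π hπ, hker,
      sup_comm] at hn

end RegularElement

section KrullAkizuki

theorem isNoetherian_of_forall_length_le {R M : Type*} [Ring R] [AddCommGroup M] [Module R M]
    {ℓ : ℕ∞} (hℓ : ℓ ≠ ⊤) (h : ∀ N : Submodule R M, N.FG → Module.length R N ≤ ℓ) :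
    IsNoetherian R M := by
  rw [isNoetherian_iff_fg_wellFounded]
  have height_lt (N : {N : Submodule R M // N.FG}) : Order.height N.1 < ⊤ :=
    (Module.length_submodule.symm.trans_le (h N.1 N.2)).trans_lt hℓ.lt_top
  have hmono : StrictMono fun N : {N : Submodule R M // N.FG} => (Order.height N.1).toNat :=
    fun N P hNP => ENat.natCast_lt_natCast.1 <| by
      simpa only [ENat.natCast_toNat, (height_lt _).ne, ne_eq, not_false_eq_true] using
        Order.height_strictMono (Subtype.coe_lt_coe.2 hNP) (height_lt N)
  have hbdd (N : {N : Submodule R M // N.FG}) : (Order.height N.1).toNat ≤ ℓ.toNat :=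
    ENat.toNat_le_toNat (Module.length_submodule.symm.trans_le (h N.1 N.2)) hℓ
  exact StrictMono.wellFoundedGT (f := fun N => (⟨_, hbdd N⟩ : Set.Iic ℓ.toNat)) hmono

theorem exists_algebraMap_mem_of_ne_bot {O K : Type*} [CommRing O] [IsDomain O] [Field K]
    [Algebra O K] [IsFractionRing O K] {S : Subalgebra O K} {J : Ideal S} (hJ : J ≠ ⊥) :
    ∃ x : O, x ≠ 0 ∧ algebraMap O S x ∈ J := by
  obtain ⟨s, hs, hs0⟩ := Submodule.exists_mem_ne_zero_of_ne_bot hJ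
  obtain ⟨⟨a, b⟩, hab⟩ := IsLocalization.surj (nonZeroDivisors O) (s : K)
  have hab' : s * algebraMap O S b = algebraMap O S a := Subtype.ext hab
  refine ⟨a, ?_, hab' ▸ J.mul_mem_right _ hs⟩
  rintro rfl
  have hb : algebraMap O K b ≠ 0 := IsFractionRing.to_map_ne_zero_of_mem_nonZeroDivisors b.2
  refine hs0 (Subtype.ext ?_)
  simpa [hb] using hab

variable {O : Type*} [CommRing O] [IsDomain O] [IsNoetherianRing O] [Ring.KrullDimLE 1 O]

theorem length_quotient_ne_top {I : Ideal O} (hI : I ≠ ⊥) : Module.length O (O ⧸ I) ≠ ⊤ := by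
  obtain ⟨y, hy, hy0⟩ := Submodule.exists_mem_ne_zero_of_ne_bot hI
  exact ne_top_of_le_ne_top (Ring.ord_ne_top (mem_nonZeroDivisors_of_ne_zero hy0))
    (Module.length_le_of_surjective
      (Submodule.factor ((Ideal.span_singleton_le_iff_mem I).2 hy)) (Submodule.factor_surjective _))

open Pointwise in
theorem length_le_ord_of_surjective {P : Type*} [AddCommGroup P] [Module O P] {x : O}
    (hx : x ≠ 0) (hP : ∀ p : P, x • p = 0) {I : Ideal O} {g : I →ₗ[O] P}
    (hg : Function.Surjective g) : Module.length O P ≤ Ring.ord O x := by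
  rcases eq_or_ne I ⊥ with rfl | hI
  · have : Subsingleton P := hg.subsingleton
    simp [Module.length_eq_zero]
  let N : Ideal O := (LinearMap.ker g).map I.subtype
  have hN : LinearMap.ker g = Submodule.comap I.subtype N :=
    (Submodule.comap_map_eq_of_injective I.subtype_injective _).symm
  have hNI : N ≤ I := Submodule.map_subtype_le _ _
  have hxN : x • I ≤ N := by
    rintro _ ⟨y, hy, rfl⟩
    exact ⟨⟨x * y, I.mul_mem_left x hy⟩, by
      simpa [hP] using LinearMap.map_smul g x ⟨y, hy⟩, rfl⟩
  let ι : (I ⧸ LinearMap.ker g) →ₗ[O] O ⧸ N := Submodule.mapQ _ _ I.subtype hN.le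
  have hι : Function.Injective ι := by
    rw [← LinearMap.ker_eq_bot, Submodule.ker_mapQ, ← hN, Submodule.mkQ_map_self]
  have hexact : Function.Exact ι (Submodule.factor hNI) := by
    rw [LinearMap.exact_iff, Submodule.factor, Submodule.ker_mapQ, Submodule.range_mapQ]
    simp
  refine (ENat.add_le_add_iff_right (length_quotient_ne_top hI)).1 ?_
  calc Module.length O P + Module.length O (O ⧸ I)
      = Module.length O (O ⧸ N) := by
        rw [← (g.quotKerEquivOfSurjective hg).length_eq, Module.length_eq_add_of_exact ι _ hι
          (Submodule.factor_surjective hNI) hexact]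
    _ ≤ Module.length O (O ⧸ x • I) :=
        Module.length_le_of_surjective _ (Submodule.factor_surjective hxN)
    _ = Ring.ord O x + Module.length O (O ⧸ I) := by
        rw [Module.length_eq_add_of_exact (Ideal.mulQuot x I) _
          (Ideal.mulQuot_injective I (mem_nonZeroDivisors_of_ne_zero hx))
          (Ideal.quotOfMul_surjective I) (Ideal.exact_mulQuot_quotOfMul I), add_comm, Ring.ord]

variable {K : Type*} [Field K] [Algebra O K] [IsFractionRing O K]

theorem length_le_ord_of_finite {P M : Type*} [AddCommGroup P] [Module O P] [AddCommGroup M]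
    [Module O M] [Module.Finite O M] {x : O} (hx : x ≠ 0) (hP : ∀ p : P, x • p = 0)
    {i : M →ₗ[O] K} (hi : Function.Injective i) {g : M →ₗ[O] P} (hg : Function.Surjective g) :
    Module.length O P ≤ Ring.ord O x := by
  let F : FractionalIdeal (nonZeroDivisors O) K :=
    ⟨LinearMap.range i, FractionalIdeal.isFractional_of_fg (Module.Finite.iff_fg.1 inferInstance)⟩
  let e : M ≃ₗ[O] F.num := (LinearEquiv.ofInjective i hi).trans F.equivNumOfIsLocalization
  exact length_le_ord_of_surjective hx hP (g := g ∘ₗ e.symm.toLinearMap) (hg.comp e.symm.surjective)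

theorem isNoetherian_quotient_span_algebraMap (S : Subalgebra O K) {x : O} (hx : x ≠ 0) :
    IsNoetherian O (S ⧸ Ideal.span {algebraMap O S x}) := by
  refine isNoetherian_of_forall_length_le (Ring.ord_ne_top (mem_nonZeroDivisors_of_ne_zero hx))
    fun N hN => ?_
  let π : S →ₗ[O] S ⧸ Ideal.span {algebraMap O S x} :=
    (Ideal.Quotient.mkₐ O (Ideal.span {algebraMap O S x})).toLinearMap
  have hπ : Function.Surjective π := Ideal.Quotient.mk_surjective
  have hx_smul (p : S ⧸ Ideal.span {algebraMap O S x}) : x • p = 0 := by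
    obtain ⟨s, rfl⟩ := hπ p
    rw [← map_smul, Algebra.smul_def]
    exact Ideal.Quotient.eq_zero_iff_mem.2
      (Ideal.mul_mem_right _ _ (Ideal.mem_span_singleton_self _))
  obtain ⟨T, hT, rfl⟩ := Submodule.fg_def.1 hN
  let M := Submodule.span O (Function.surjInv hπ '' T)
  have : Module.Finite O M := .span_of_finite O (hT.image _)
  have hM : M.map π = Submodule.span O T := by
    simp only [M, Submodule.map_span, Set.image_image, Function.surjInv_eq, Set.image_id']
  rw [← hM]
  exact length_le_ord_of_finite hx (fun p => Subtype.ext (hx_smul p))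
    (i := S.val.toLinearMap ∘ₗ M.subtype) (Subtype.val_injective.comp Subtype.val_injective)
    (π.submoduleMap_surjective M)

theorem isNoetherianRing_subalgebra_of_krullDimLE_one (S : Subalgebra O K) :
    IsNoetherianRing S := by
  refine (isNoetherianRing_iff_ideal_fg S).2 fun J => ?_
  rcases eq_or_ne J ⊥ with rfl | hJ
  · exact Submodule.fg_bot
  obtain ⟨x, hx, hxJ⟩ := exists_algebraMap_mem_of_ne_bot hJ
  have := isNoetherian_quotient_span_algebraMap S hx
  have : IsNoetherian S (S ⧸ Ideal.span {algebraMap O S x}) := isNoetherian_of_tower O this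
  refine Submodule.fg_of_fg_map_of_fg_inf_ker (Ideal.span {algebraMap O S x}).mkQ
    (IsNoetherian.noetherian _) ?_
  rw [Submodule.ker_mkQ, inf_eq_right.2 ((Ideal.span_singleton_le_iff_mem J).2 hxJ)]
  exact Submodule.fg_span_singleton _

end KrullAkizuki

universe u

section DominatingDVR

theorem exists_isDiscreteValuationRing_isLocalHom {O : Type*} (K : Type*) [CommRing O]
    [IsDomain O] [IsNoetherianRing O] [Ring.KrullDimLE 1 O] [IsLocalRing O] [Field K] [Algebra O K]
    [IsFractionRing O K] (hO : IsLocalRing.maximalIdeal O ≠ ⊥) :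
    ∃ (W : ValuationSubring K) (h : ∀ x, algebraMap O K x ∈ W),
      IsDiscreteValuationRing W ∧ IsLocalHom ((algebraMap O K).codRestrict W.toSubring h) := by
  obtain ⟨W, h, hlocal⟩ := IsLocalRing.exists_factor_valuationRing (algebraMap O K)
  refine ⟨W, h, ?_, hlocal⟩
  have : IsNoetherianRing W :=
    isNoetherianRing_subalgebra_of_krullDimLE_one { W.toSubring with algebraMap_mem' := h }
  have hW : ¬ IsField W := by
    obtain ⟨x, hx, hx0⟩ := Submodule.exists_mem_ne_zero_of_ne_bot hO
    rw [IsLocalRing.isField_iff_maximalIdeal_eq]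
    refine (Submodule.ne_bot_iff _).2 ⟨⟨algebraMap O K x, h x⟩, fun hu => hx (hlocal.1 _ hu), ?_⟩
    exact fun h0 => hx0 (IsFractionRing.injective O K (by simpa using congrArg Subtype.val h0))
  have hval : ValuationRing W := inferInstance
  exact ((IsDiscreteValuationRing.TFAE W hW).out 0 1).2 hval

theorem exists_isDiscreteValuationRing_mem_maximalIdeal {A : Type u} [CommRing A] [IsDomain A]
    [IsNoetherianRing A] {x : A} (hx0 : x ≠ 0) (hx : ¬ IsUnit x) :
    ∃ (V : Type u) (_ : CommRing V) (_ : IsDomain V) (_ : IsDiscreteValuationRing V)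
      (φ : A →+* V), Function.Injective φ ∧ φ x ∈ IsLocalRing.maximalIdeal V := by
  obtain ⟨P, hP⟩ := Ideal.nonempty_minimalPrimes (mt Ideal.span_singleton_eq_top.1 hx)
  have : P.IsPrime := hP.isPrime
  have hxP : x ∈ P := hP.1.2 (Ideal.mem_span_singleton_self x)
  let O := Localization.AtPrime P
  have hO : algebraMap A O x ∈ IsLocalRing.maximalIdeal O :=
    (IsLocalization.AtPrime.to_map_mem_maximal_iff O P x).2 hxP
  have hinj : Function.Injective (algebraMap A O) :=
    IsLocalization.injective O P.primeCompl_le_nonZeroDivisors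
  have : IsDomain O := IsLocalization.isDomain_localization P.primeCompl_le_nonZeroDivisors
  have hdim : Ring.KrullDimLE 1 O := by
    rw [Ring.krullDimLE_iff, IsLocalization.AtPrime.ringKrullDim_eq_height P O]
    exact_mod_cast Ideal.height_le_one_of_isPrincipal_of_mem_minimalPrimes _ P hP
  have hbot : IsLocalRing.maximalIdeal O ≠ ⊥ :=
    (Submodule.ne_bot_iff _).2 ⟨_, hO, (map_ne_zero_iff _ hinj).2 hx0⟩
  obtain ⟨W, hW, hDVR, hlocal⟩ :=
    exists_isDiscreteValuationRing_isLocalHom (FractionRing A) hbot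
  refine ⟨W, inferInstance, inferInstance, hDVR, ((algebraMap O _).codRestrict W.toSubring hW).comp
    (algebraMap A O), ?_, ?_⟩
  · have hcod : Function.Injective ((algebraMap O (FractionRing A)).codRestrict W.toSubring hW) :=
      fun y z h => IsFractionRing.injective O (FractionRing A) (congrArg Subtype.val h)
    exact hcod.comp hinj
  · exact map_nonunit ((algebraMap O _).codRestrict W.toSubring hW) _ hO

theorem exists_valuationSubring_mem_nonunits {A : Type*} (K : Type*) [CommRing A] [Field K]
    [Algebra A K] [FaithfulSMul A K] {I : Ideal A} (hI : I ≠ ⊤) :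
    ∃ W : ValuationSubring K, (∀ a, algebraMap A K a ∈ W) ∧
      ∀ a ∈ I, algebraMap A K a ∈ W.nonunits := by
  obtain ⟨M, hM, hIM⟩ := I.exists_le_maximal hI
  have hunit (s : M.primeCompl) : IsUnit (algebraMap A K s) :=
    isUnit_iff_ne_zero.2 ((map_ne_zero_iff _ (FaithfulSMul.algebraMap_injective A K)).2
      fun h => s.2 (h ▸ M.zero_mem))
  let f : Localization.AtPrime M →+* K := IsLocalization.lift hunit
  have hf (a : A) : f (algebraMap A _ a) = algebraMap A K a := IsLocalization.lift_eq hunit a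
  obtain ⟨W, hW, hlocal⟩ := IsLocalRing.exists_factor_valuationRing f
  refine ⟨W, fun a => hf a ▸ hW _, fun a ha => ?_⟩
  rw [← hf]
  refine ValuationSubring.coe_mem_nonunits_iff (a := ⟨_, hW _⟩) |>.2 fun hu => ?_
  exact (IsLocalization.AtPrime.to_map_mem_maximal_iff (Localization.AtPrime M) M a).2 (hIM ha)
    (hlocal.1 _ hu)

theorem exists_forall_div_mem_valuationSubring {A K : Type*} [CommRing A] [Field K]
    [Algebra A K] [FaithfulSMul A K] (W : ValuationSubring K) {T : Finset A}
    (hT : Ideal.span (T : Set A) ≠ ⊥) :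
    ∃ x ∈ T, x ≠ 0 ∧ ∀ y ∈ T, algebraMap A K y / algebraMap A K x ∈ W := by
  obtain ⟨z, hzT, hz⟩ : ∃ z ∈ T, z ≠ 0 := by simpa [Ideal.span_eq_bot] using hT
  obtain ⟨x, hxT, hx⟩ := T.exists_max_image (fun y => W.valuation (algebraMap A K y)) ⟨z, hzT⟩
  have ne_zero {a : A} : a ≠ 0 ↔ 0 < W.valuation (algebraMap A K a) := by
    rw [zero_lt_iff, Valuation.ne_zero_iff,
      map_ne_zero_iff _ (FaithfulSMul.algebraMap_injective A K)]
  have hx0 : 0 < W.valuation (algebraMap A K x) := (ne_zero.1 hz).trans_le (hx z hzT)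
  refine ⟨x, hxT, ne_zero.2 hx0, fun y hy => ?_⟩
  rw [← W.valuation_le_one_iff, map_div₀]
  exact div_le_one_of_le₀ (hx y hy) zero_le

theorem exists_fg_subalgebra_map_le_span_singleton {A : Type*} (K : Type*) [CommRing A]
    [IsNoetherianRing A] [Field K] [Algebra A K] [FaithfulSMul A K] {I : Ideal A}
    (hI0 : I ≠ ⊥) (hI : I ≠ ⊤) :
    ∃ S : Subalgebra A K, S.FG ∧ ∃ x : S, x ≠ 0 ∧ ¬ IsUnit x ∧
      I.map (algebraMap A S) ≤ Ideal.span {x} := by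
  obtain ⟨W, hW, hIW⟩ := exists_valuationSubring_mem_nonunits K hI
  obtain ⟨T, rfl⟩ := IsNoetherian.noetherian I
  obtain ⟨x, hxT, hx0, hdiv⟩ := exists_forall_div_mem_valuationSubring W hI0
  have hxK : algebraMap A K x ≠ 0 :=
    (map_ne_zero_iff _ (FaithfulSMul.algebraMap_injective A K)).2 hx0
  -- The chart of the blow-up of `I` on which `W` is centred.
  let S := Algebra.adjoin A ((fun y => algebraMap A K y / algebraMap A K x) '' (T : Set A))
  have hSW : S ≤ { W.toSubring with algebraMap_mem' := hW } :=
    Algebra.adjoin_le (Set.image_subset_iff.2 hdiv)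
  refine ⟨S, Subalgebra.fg_def.2 ⟨_, T.finite_toSet.image _, rfl⟩, algebraMap A S x, ?_, ?_, ?_⟩
  · exact fun h => hxK (congrArg Subtype.val h)
  · intro hu
    obtain ⟨v, hv⟩ := hu.exists_right_inv
    refine ((ValuationSubring.mem_nonunits_iff_or _).1 (hIW x (Ideal.subset_span hxT))).elim hxK
      fun hinv => hinv ?_
    have hxv : algebraMap A K x * v = 1 := congrArg Subtype.val hv
    rw [← eq_inv_of_mul_eq_one_right hxv]
    exact hSW v.2
  · rw [Ideal.map_span, Ideal.span_le]
    rintro _ ⟨y, hy, rfl⟩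
    refine Ideal.mem_span_singleton'.2 ⟨⟨_, Algebra.subset_adjoin ⟨y, hy, rfl⟩⟩, Subtype.ext ?_⟩
    exact div_mul_cancel₀ _ hxK

theorem exists_isDiscreteValuationRing_le_comap_maximalIdeal {A : Type u} [CommRing A] [IsDomain A]
    [IsNoetherianRing A] {I : Ideal A} (hI : I ≠ ⊤) :
    ∃ (V : Type u) (_ : CommRing V) (_ : IsDomain V) (_ : IsDiscreteValuationRing V)
      (φ : A →+* V), Function.Injective φ ∧ I ≤ (IsLocalRing.maximalIdeal V).comap φ := by
  rcases eq_or_ne I ⊥ with rfl | hI0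
  · refine ⟨PowerSeries (FractionRing A), inferInstance, inferInstance, inferInstance,
      PowerSeries.C.comp (algebraMap A (FractionRing A)), ?_, bot_le⟩
    exact PowerSeries.C_injective.comp (IsFractionRing.injective A _)
  obtain ⟨S, hS, x, hx0, hx, hIx⟩ :=
    exists_fg_subalgebra_map_le_span_singleton (FractionRing A) hI0 hI
  have : Algebra.FiniteType A S := S.fg_iff_finiteType.1 hS
  have : IsNoetherianRing S := Algebra.FiniteType.isNoetherianRing A S
  obtain ⟨V, _, _, _, φ, hφ, hφx⟩ := exists_isDiscreteValuationRing_mem_maximalIdeal hx0 hx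
  refine ⟨V, inferInstance, inferInstance, inferInstance, φ.comp (algebraMap A S),
    hφ.comp (FaithfulSMul.algebraMap_injective A S), ?_⟩
  rw [← Ideal.comap_comap]
  exact Ideal.map_le_iff_le_comap.1
    (hIx.trans ((Ideal.span_singleton_le_iff_mem _).2 hφx))

end DominatingDVR


section DescentToDVR

variable {k A V B : Type*} [Field k] [CommRing A] [CommRing V] [CommRing B]
  [Algebra k A] [Algebra k V] [Algebra k B]

theorem tensorIdeal_bot_pow (J : Ideal B) (n : ℕ) :
    tensorIdeal k (⊥ : Ideal V) J ^ n = tensorIdeal k (⊥ : Ideal V) (J ^ n) := by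
  simp only [tensorIdeal, Ideal.map_bot, bot_sup_eq, Ideal.map_pow]

theorem mem_tensorIdeal_bot_of_tmul_one_mul_mem [IsDomain V] {t : V} (ht : t ≠ 0) {J : Ideal B}
    {y : V ⊗[k] B} (hy : t ⊗ₜ 1 * y ∈ tensorIdeal k (⊥ : Ideal V) J) :
    y ∈ tensorIdeal k (⊥ : Ideal V) J := by
  by_contra hy'
  obtain ⟨w, hw, hne⟩ := exists_slice_notMem hy'
  have h : slice V w (t • y) ∈ (⊥ : Ideal V) := slice_mem hw (by rwa [Algebra.smul_def])
  rw [map_smul, smul_eq_mul, Ideal.mem_bot] at h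
  exact hne ((mul_eq_zero.1 h).resolve_left ht)

theorem ker_map_mkₐ_span_singleton (t : V) :
    RingHom.ker (Algebra.TensorProduct.map (Ideal.Quotient.mkₐ k (Ideal.span {t}))
      (AlgHom.id k B)) = Ideal.span {t ⊗ₜ[k] (1 : B)} := by
  refine (Algebra.TensorProduct.rTensor_ker _ (Ideal.Quotient.mkₐ_surjective k _)).trans ?_
  have hker : RingHom.ker (Ideal.Quotient.mkₐ k (Ideal.span {t})) = Ideal.span {t} := Ideal.mk_ker
  rw [hker, Ideal.map_span, Set.image_singleton]
  rfl

theorem tensorIdeal_span_singleton (t : V) (J : Ideal B) :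
    tensorIdeal k (Ideal.span {t}) J = Ideal.span {t ⊗ₜ[k] (1 : B)} ⊔ tensorIdeal k ⊥ J := by
  simp only [tensorIdeal, Ideal.map_span, Set.image_singleton, Ideal.map_bot, bot_sup_eq,
    Algebra.TensorProduct.includeLeft_apply]

theorem isDomain_adicCompletion_tensorIdeal_span_singleton [IsDomain V] {t : V} (ht : t ≠ 0)
    {J : Ideal B}
    [IsDomain (AdicCompletion (tensorIdeal k (⊥ : Ideal (V ⧸ Ideal.span {t})) J)
      ((V ⧸ Ideal.span {t}) ⊗[k] B))] :
    IsDomain (AdicCompletion (tensorIdeal k (Ideal.span {t}) J) (V ⊗[k] B)) := by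
  let π : V ⊗[k] B →+* (V ⧸ Ideal.span {t}) ⊗[k] B :=
    Algebra.TensorProduct.map (Ideal.Quotient.mkₐ k (Ideal.span {t})) (AlgHom.id k B)
  have hπ : Function.Surjective π :=
    TensorProduct.map_surjective Ideal.Quotient.mk_surjective Function.surjective_id
  have hmap : (tensorIdeal k (⊥ : Ideal V) J).map π = tensorIdeal k ⊥ J :=
    (map_tensorIdeal _ _ _ _).trans (congrArg₂ _ Ideal.map_bot (Ideal.map_id J))
  have : IsDomain (AdicCompletion ((tensorIdeal k (⊥ : Ideal V) J).map π)
      ((V ⧸ Ideal.span {t}) ⊗[k] B)) := by rwa [hmap]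
  rw [tensorIdeal_span_singleton]
  refine isDomain_adicCompletion_of_quotient (fun n y hy => ?_) hπ (ker_map_mkₐ_span_singleton t)
  rw [tensorIdeal_bot_pow] at hy ⊢
  exact mem_tensorIdeal_bot_of_tmul_one_mul_mem ht hy

theorem exists_slice_notMem_of_mk_ne_zero {I : Ideal A} {J : Ideal B}
    {c : AdicCompletion.AdicCauchySequence (tensorIdeal k I J) (A ⊗[k] B)}
    (hc : AdicCompletion.mk _ _ c ≠ 0) :
    ∃ (n : ℕ) (w : B →ₗ[k] k), (∀ b ∈ J ^ n, w b = 0) ∧ slice A w (c (n + n)) ∉ I ^ n := by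
  obtain ⟨n, hn⟩ := not_forall.1 (mt adicCompletion_mk_eq_zero_iff.2 hc)
  refine ⟨n, exists_slice_notMem fun h => hn ?_⟩
  rw [← sub_sub_cancel (c (n + n)) (c n)]
  exact sub_mem (tensorIdeal_pow_pow_le I J n h)
    (adicCauchySequence_sub_mem c (Nat.le_add_left n n))

-- `w` vanishes on `J ^ n`, so `slice A w` carries the `(i + n)`-th power of the ideal into `I ^ i`.
theorem exists_forall_slice_sub_mem (I : Ideal A) [IsPrecomplete I A] {J : Ideal B} {n : ℕ}
    {w : B →ₗ[k] k} (hw : ∀ b ∈ J ^ n, w b = 0)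
    (c : AdicCompletion.AdicCauchySequence (tensorIdeal k I J) (A ⊗[k] B)) :
    ∃ a : A, ∀ i, slice A w (c (i + n)) - a ∈ I ^ i := by
  have hcauchy {i j : ℕ} (hij : i ≤ j) :
      slice A w (c (i + n)) ≡ slice A w (c (j + n)) [SMOD (I ^ i • ⊤ : Submodule A A)] := by
    rw [SModEq.comm, SModEq.sub_mem, ← map_sub, smul_eq_mul, Ideal.mul_top]
    exact slice_mem hw (tensorIdeal_pow_add_le I J i n
      (adicCauchySequence_sub_mem c (Nat.add_le_add_right hij n)))
  obtain ⟨a, ha⟩ := IsPrecomplete.prec' _ hcauchy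
  exact ⟨a, fun i => by simpa using SModEq.sub_mem.1 (ha i)⟩

theorem adicCompletionMap_tensor_injective {I : Ideal A} [IsPrecomplete I A] {I' : Ideal V}
    [IsHausdorff I' V] {φ : A →ₐ[k] V} (hφ : Function.Injective φ) (hI : I ≤ I'.comap φ)
    (J : Ideal B) :
    Function.Injective (adicCompletionMap
      (Algebra.TensorProduct.map φ (AlgHom.id k B) : A ⊗[k] B →+* V ⊗[k] B)
      (tensorIdeal_le_comap_map φ (AlgHom.id k B) hI (J := J) (J' := J) fun _ hb => hb)) := by
  refine (injective_iff_map_eq_zero _).2 fun x hx => ?_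
  obtain ⟨c, rfl⟩ := AdicCompletion.mk_surjective _ _ x
  by_contra hc
  obtain ⟨n, w, hw, hne⟩ := exists_slice_notMem_of_mk_ne_zero hc
  obtain ⟨a, ha⟩ := exists_forall_slice_sub_mem I hw c
  have slice_mem_pow (i : ℕ) : φ (slice A w (c (i + n))) ∈ I' ^ i := by
    have := slice_mem hw (tensorIdeal_pow_add_le I' J i n
      (adicCompletionMap_mk_eq_zero_iff.1 hx (i + n)))
    exact slice_map φ (AlgHom.id k B) w (c (i + n)) ▸ this
  have hφa : φ a = 0 := IsHausdorff.haus inferInstance (I := I') _ fun i => by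
    have := sub_mem (slice_mem_pow i) (pow_le_comap_pow hI i (ha i))
    simpa [SModEq.zero] using this
  rw [(map_eq_zero_iff φ hφ).1 hφa] at ha
  exact hne (by simpa using ha n)

theorem isDomain_adicCompletion_tensorIdeal_of_forall_bot (k : Type*) {A : Type u} {B : Type*}
    [Field k] [CommRing A] [CommRing B] [Algebra k A] [Algebra k B] [IsDomain A]
    [IsNoetherianRing A]
    {I : Ideal A} (hI : I ≠ ⊤) [IsPrecomplete I A] (J : Ideal B)
    (h : ∀ (L : Type u) [CommRing L] [IsDomain L] [Algebra k L],
      IsDomain (AdicCompletion (tensorIdeal k (⊥ : Ideal L) J) (L ⊗[k] B))) :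
    IsDomain (AdicCompletion (tensorIdeal k I J) (A ⊗[k] B)) := by
  obtain ⟨V, _, _, _, φ, hφ, hIφ⟩ := exists_isDiscreteValuationRing_le_comap_maximalIdeal hI
  let _ : Algebra k V := (φ.comp (algebraMap k A)).toAlgebra
  let φ' : A →ₐ[k] V := { φ with commutes' := fun _ => rfl }
  obtain ⟨t, ht⟩ := IsDiscreteValuationRing.exists_irreducible V
  rw [ht.maximalIdeal_eq] at hIφ
  have hprime : (Ideal.span {t}).IsPrime := ht.maximalIdeal_eq ▸ inferInstance
  have := h (V ⧸ Ideal.span {t})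
  have : IsHausdorff (Ideal.span {t}) V := .of_isDomain _ hprime.ne_top
  have := isDomain_adicCompletion_tensorIdeal_span_singleton (k := k) ht.ne_zero (J := J)
  exact (adicCompletionMap_tensor_injective (φ := φ') hφ hIφ J).isDomain _

theorem isDomain_adicCompletion_tensorIdeal_bot_bot (k A B : Type*) [Field k] [IsAlgClosed k]
    [CommRing A] [CommRing B] [IsDomain A] [IsDomain B] [Algebra k A] [Algebra k B] :
    IsDomain (AdicCompletion (tensorIdeal k (⊥ : Ideal A) (⊥ : Ideal B)) (A ⊗[k] B)) := by
  have := isDomain_tensorProduct k A B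
  rw [tensorIdeal_bot_bot]
  exact (AdicCompletion.ofAlgEquiv (⊥ : Ideal (A ⊗[k] B))).symm.toMulEquiv.isDomain _

theorem isDomain_adicCompletion_tensorIdeal_comm {I : Ideal A} {J : Ideal B}
    [IsDomain (AdicCompletion (tensorIdeal k I J) (A ⊗[k] B))] :
    IsDomain (AdicCompletion (tensorIdeal k J I) (B ⊗[k] A)) := by
  let e : B ⊗[k] A ≃ₐ[k] A ⊗[k] B := Algebra.TensorProduct.comm k B A
  have hmap : (tensorIdeal k J I).map (e : B ⊗[k] A →ₐ[k] A ⊗[k] B) = tensorIdeal k I J := by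
    rw [tensorIdeal, Ideal.map_sup, Ideal.map_mapₐ, Ideal.map_mapₐ,
      Algebra.TensorProduct.comm_comp_includeLeft, Algebra.TensorProduct.comm_comp_includeRight,
      sup_comm, tensorIdeal]
  exact isDomain_adicCompletion_of_ringEquiv e.toRingEquiv hmap

end DescentToDVR

theorem tensorRadical_eq_tensorIdeal_maximalIdeal (k A B : Type*) [Field k] [CommRing A]
    [CommRing B] [IsLocalRing A] [IsLocalRing B] [Algebra k A] [Algebra k B] :
    tensorRadical k A B =
      tensorIdeal k (IsLocalRing.maximalIdeal A) (IsLocalRing.maximalIdeal B) := by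
  rw [tensorRadical, IsLocalRing.jacobson_eq_maximalIdeal (⊥ : Ideal A) bot_ne_top,
    IsLocalRing.jacobson_eq_maximalIdeal (⊥ : Ideal B) bot_ne_top, tensorIdeal]

theorem isDomain_completedTensor_general (k : Type*) {A B : Type*} [Field k] [IsAlgClosed k]
    [CommRing A] [CommRing B] [IsNoetherianRing A] [IsNoetherianRing B] [IsDomain A] [IsDomain B]
    [Algebra k A] [Algebra k B] {I : Ideal A} {J : Ideal B} (hI : I ≠ ⊤) (hJ : J ≠ ⊤)
    [IsPrecomplete I A] [IsPrecomplete J B] :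
    IsDomain (AdicCompletion (tensorIdeal k I J) (A ⊗[k] B)) := by
  refine isDomain_adicCompletion_tensorIdeal_of_forall_bot k hI J fun L _ _ _ => ?_
  have : IsDomain (AdicCompletion (tensorIdeal k J (⊥ : Ideal L)) (B ⊗[k] L)) :=
    isDomain_adicCompletion_tensorIdeal_of_forall_bot k hJ ⊥ fun L' _ _ _ =>
      isDomain_adicCompletion_tensorIdeal_bot_bot k L' L
  exact isDomain_adicCompletion_tensorIdeal_comm

/-- **Statement 19.** Let `k` be an algebraically closed field and `A` and `B` two
complete Noetherian local commutative rings containing `k` such that `A ⊗̂[k] B` is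
Noetherian. If `A` and `B` are integral domains, then so is `A ⊗̂[k] B`. -/
theorem isDomain_completedTensor (k A B : Type*) [Field k] [IsAlgClosed k]
    [CommRing A] [CommRing B] [IsNoetherianRing A] [IsNoetherianRing B]
    [IsLocalRing A] [IsLocalRing B]
    [IsAdicComplete (IsLocalRing.maximalIdeal A) A]
    [IsAdicComplete (IsLocalRing.maximalIdeal B) B]
    [Algebra k A] [Algebra k B]
    [IsDomain A] [IsDomain B]
    (hE : IsNoetherianRing (CompletedTensor k A B)) :
    IsDomain (CompletedTensor k A B) := by
  unfold CompletedTensor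
  rw [tensorRadical_eq_tensorIdeal_maximalIdeal]
  exact isDomain_completedTensor_general k (Ideal.IsPrime.ne_top inferInstance)
    (Ideal.IsPrime.ne_top inferInstance)
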